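/- (Van Benthem–style characterisation of InqML) Let P be a finite set of atomic propositions and let C be any of the following four classes: all relational inquisitive modal models over P; all finite such models; all locally full such models; all finite locally full such models. Then for every class K of world-pointed models from C, the following are equivalent: (i) there is an InqML formula ψ with K = { (𝔐,w) ∈ C : M(𝔐),w ⊨ ψ }, where M(𝔐) is the inquisitive modal model induced by 𝔐; (ii) there is an FO formula φ(x) with one free world-sort variable such that K = { (𝔐,w) ∈ C : 𝔐 ⊨ φ(w) } and K is ~-invariant over C (whenever (𝔐,w) ∈ K, (𝔐',w') ∈ C and 𝔐,w ~ 𝔐',w', then (𝔐',w') ∈ K). -/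

import Mathlib

/-- Formulas of inquisitive modal logic InqML over atomic propositions `P`. -/
inductive InqForm (P : Type) : Type
  | atom : P → InqForm P
  | bot : InqForm P
  | and : InqForm P → InqForm P → InqForm P
  | impl : InqForm P → InqForm P → InqForm P
  | idisj : InqForm P → InqForm P → InqForm P
  | box : InqForm P → InqForm P
  | boxplus : InqForm P → InqForm P

/-- An inquisitive modal model `M = ⟨W, Σ, V⟩`. -/
structure InqModel (P : Type) where
  W : Type
  Sig : W → Set (Set W)
  Sig_nonempty : ∀ w, (Sig w).Nonempty
  Sig_downward : ∀ w, ∀ s ∈ Sig w, ∀ t ⊆ s, t ∈ Sig w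
  V : P → Set W

/-- `σ(w) = ⋃ Σ(w)`. -/
def InqModel.sigma {P : Type} (M : InqModel P) (w : M.W) : Set M.W :=
  ⋃₀ M.Sig w

/-- Support of a formula at an information state `s ⊆ W`. -/
def support {P : Type} (M : InqModel P) : InqForm P → Set M.W → Prop
  | .atom p, s => s ⊆ M.V p
  | .bot, s => s = ∅
  | .and φ ψ, s => support M φ s ∧ support M ψ s
  | .impl φ ψ, s => ∀ t ⊆ s, support M φ t → support M ψ t
  | .idisj φ ψ, s => support M φ s ∨ support M ψ s
  | .box φ, s => ∀ w ∈ s, support M φ (M.sigma w)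
  | .boxplus φ, s => ∀ w ∈ s, ∀ t ∈ M.Sig w, support M φ t

/-- Truth at a world: `M,w ⊨ φ` iff `M,{w} ⊨ φ`. -/
def truth {P : Type} (M : InqModel P) (w : M.W) (φ : InqForm P) : Prop :=
  support M φ {w}

/-- Modal depth: maximal nesting depth of `□` and `⊞`. -/
def mdepth {P : Type} : InqForm P → ℕ
  | .atom _ => 0
  | .bot => 0
  | .and φ ψ => max (mdepth φ) (mdepth ψ)
  | .impl φ ψ => max (mdepth φ) (mdepth ψ)
  | .idisj φ ψ => max (mdepth φ) (mdepth ψ)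
  | .box φ => mdepth φ + 1
  | .boxplus φ => mdepth φ + 1

/-- Lift of a relation between worlds to sets of worlds: every world on either
side is related to some world on the other side. -/
def StateRel {W W' : Type} (Z : W → W' → Prop) (s : Set W) (s' : Set W') : Prop :=
  (∀ w ∈ s, ∃ w' ∈ s', Z w w') ∧ (∀ w' ∈ s', ∃ w ∈ s, Z w w')

/-- `n`-bisimilarity between worlds of two inquisitive modal models. -/
def NBisimW {P : Type} (M M' : InqModel P) : ℕ → M.W → M'.W → Prop
  | 0, w, w' => ∀ p : P, w ∈ M.V p ↔ w' ∈ M'.V p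
  | n + 1, w, w' => (∀ p : P, w ∈ M.V p ↔ w' ∈ M'.V p) ∧
      (∀ s ∈ M.Sig w, ∃ s' ∈ M'.Sig w', StateRel (NBisimW M M' n) s s') ∧
      (∀ s' ∈ M'.Sig w', ∃ s ∈ M.Sig w, StateRel (NBisimW M M' n) s s')

/-- `n`-bisimilarity between information states. -/
def NBisimS {P : Type} (M M' : InqModel P) (n : ℕ) (s : Set M.W) (s' : Set M'.W) : Prop :=
  StateRel (NBisimW M M' n) s s'

/-- `Z` is a bisimulation between two inquisitive modal models. -/
def IsBisimulation {P : Type} (M M' : InqModel P) (Z : M.W → M'.W → Prop) : Prop :=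
  ∀ w w', Z w w' →
    (∀ p : P, w ∈ M.V p ↔ w' ∈ M'.V p) ∧
    (∀ s ∈ M.Sig w, ∃ s' ∈ M'.Sig w', StateRel Z s s') ∧
    (∀ s' ∈ M'.Sig w', ∃ s ∈ M.Sig w, StateRel Z s s')

/-- Bisimilarity of worlds: inclusion in some bisimulation. -/
def BisimW {P : Type} (M M' : InqModel P) (w : M.W) (w' : M'.W) : Prop :=
  ∃ Z, IsBisimulation M M' Z ∧ Z w w'

/-- Bisimilarity of information states. -/
def BisimS {P : Type} (M M' : InqModel P) (s : Set M.W) (s' : Set M'.W) : Prop :=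
  StateRel (BisimW M M') s s'

/-- Two-sorted first-order formulas over the signature with a world sort, a
state sort, binary relations `E` and `∈` between worlds and states, equality on
both sorts, and a unary predicate for each atom in `P`.  Variables are de
Bruijn indices; `FO P n m` has world-sort variables `Fin n` and state-sort
variables `Fin m`.  (Other connectives and `∃` are definable from `⊥`, `→`, `∀`.) -/
inductive FO (P : Type) : ℕ → ℕ → Type
  | eqW {n m : ℕ} : Fin n → Fin n → FO P n m
  | eqS {n m : ℕ} : Fin m → Fin m → FO P n m
  | rel {n m : ℕ} : Fin n → Fin m → FO P n m
  | mem {n m : ℕ} : Fin n → Fin m → FO P n m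
  | atom {n m : ℕ} : P → Fin n → FO P n m
  | fal {n m : ℕ} : FO P n m
  | imp {n m : ℕ} : FO P n m → FO P n m → FO P n m
  | allW {n m : ℕ} : FO P (n + 1) m → FO P n m
  | allS {n m : ℕ} : FO P n (m + 1) → FO P n m

/-- Satisfaction of a two-sorted first-order formula in the two-sorted
structure with world sort `W`, state sort `↥S`, relations `E` and membership,
and atom predicates given by `V`. -/
def FOsat {P W : Type} (S : Set (Set W)) (E : W → Set (Set W)) (V : P → Set W) :
    {n m : ℕ} → FO P n m → (Fin n → W) → (Fin m → ↥S) → Prop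
  | _, _, .eqW i j, a, _ => a i = a j
  | _, _, .eqS i j, _, b => b i = b j
  | _, _, .rel i j, a, b => (b j : Set W) ∈ E (a i)
  | _, _, .mem i j, a, b => a i ∈ (b j : Set W)
  | _, _, .atom p i, a, _ => a i ∈ V p
  | _, _, .fal, _, _ => False
  | _, _, .imp φ ψ, a, b => FOsat S E V φ a b → FOsat S E V ψ a b
  | _, _, .allW φ, a, b => ∀ w : W, FOsat S E V φ (Fin.cons w a) b
  | _, _, .allS φ, a, b => ∀ s : ↥S, FOsat S E V φ a (Fin.cons s b)

/-- A relational inquisitive modal model: a two-sorted structure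
`⟨W, S, E, ∈, (P_i)⟩` with `S ⊆ ℘(W)` (extensionality built in), satisfying
non-emptiness and downward closure. -/
structure RelModel (P : Type) where
  W : Type
  S : Set (Set W)
  E : W → Set (Set W)
  V : P → Set W
  wNonempty : Nonempty W
  sNonempty : S.Nonempty
  E_sub : ∀ w, E w ⊆ S
  E_nonempty : ∀ w, (E w).Nonempty
  downward : ∀ w, ∀ s ∈ E w, ∀ t ⊆ s, t ∈ S ∧ t ∈ E w

/-- The inquisitive modal model induced by a relational model:
`Σ(w) := E[w]`, `V(p_i) := P_i`. -/
def RelModel.toInq {P : Type} (𝔐 : RelModel P) : InqModel P where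
  W := 𝔐.W
  Sig := 𝔐.E
  Sig_nonempty := 𝔐.E_nonempty
  Sig_downward := fun w s hs t ht => (𝔐.downward w s hs t ht).2
  V := 𝔐.V

/-- Satisfaction of an `FO` formula with one free world-sort variable at a world. -/
def satW {P : Type} (𝔐 : RelModel P) (φ : FO P 1 0) (w : 𝔐.W) : Prop :=
  FOsat 𝔐.S 𝔐.E 𝔐.V φ (fun _ => w) (fun i => i.elim0)

/-- The accessibility set `R[w] = { v | v ∈ s for some s ∈ E[w] }`. -/
def RelModel.Racc {P : Type} (𝔐 : RelModel P) (w : 𝔐.W) : Set 𝔐.W :=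
  {v | ∃ s ∈ 𝔐.E w, v ∈ s}

/-- A relational model is locally full if `S ⊇ ℘(R[w])` for every world `w`. -/
def LocallyFull {P : Type} (𝔐 : RelModel P) : Prop :=
  ∀ w : 𝔐.W, ∀ t ⊆ 𝔐.Racc w, t ∈ 𝔐.S

/-!
Over finitely many atoms there are finitely many bisimulation types of each depth `n`, and each is
definable both in InqML and in first-order logic. Since an InqML formula of modal depth `n` is
invariant under `n`-bisimilarity, it remains to show that a `~`-invariant first-order property is
invariant under `n`-bisimilarity for some `n`.

Multiply all models by the same finite clock, which is advanced by every modal step. Started in a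
component that loops forever, the product is bisimilar to the original model. Started in a
component that stops after `n` steps, the products of `n`-bisimilar models are bisimilar. When `n`
is large in terms of the quantifier rank of a first-order formula, the formula cannot tell the two
starting positions apart, since a spoiler in the Ehrenfeucht–Fraïssé game cannot link the starting
positions to the far ends of the components, where alone they differ. A `~`-invariant property
defined by the formula therefore passes from a model to its product at the looping position, to
the product at the stopping position, across `n`-bisimilarity, and back.
-/

/-! ### Lifting relations to information states -/

namespace StateRel

variable {W W' : Type} {Z : W → W' → Prop} {s : Set W} {s' : Set W'}

theorem mono {Z' : W → W' → Prop} (hZ : ∀ w w', Z w w' → Z' w w') (h : StateRel Z s s') :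
    StateRel Z' s s' :=
  ⟨fun w hw => (h.1 w hw).imp fun w' => And.imp_right (hZ w w'),
    fun w' hw' => (h.2 w' hw').imp fun w => And.imp_right (hZ w w')⟩

theorem symm {Z' : W' → W → Prop} (hZ : ∀ w w', Z w w' → Z' w' w) (h : StateRel Z s s') :
    StateRel Z' s' s :=
  And.symm (h.mono (Z' := fun w w' => Z' w' w) hZ)

theorem empty : StateRel Z ∅ ∅ :=
  ⟨fun _ hw => hw.elim, fun _ hw' => hw'.elim⟩

theorem singleton {w : W} {w' : W'} (h : Z w w') : StateRel Z {w} {w'} :=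
  ⟨fun _ hv => ⟨w', rfl, hv ▸ h⟩, fun _ hv' => ⟨w, rfl, hv' ▸ h⟩⟩

theorem exists_subset {t' : Set W'} (h : StateRel Z s s') (ht' : t' ⊆ s') :
    ∃ t ⊆ s, StateRel Z t t' := by
  refine ⟨{w ∈ s | ∃ w' ∈ t', Z w w'}, Set.sep_subset _ _, fun w hw => hw.2, fun w' hw' => ?_⟩
  obtain ⟨w, hw, hww'⟩ := h.2 w' (ht' hw')
  exact ⟨w, ⟨hw, w', hw', hww'⟩, hww'⟩

theorem sUnion {A : Set (Set W)} {A' : Set (Set W')} (h : StateRel (StateRel Z) A A') :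
    StateRel Z (⋃₀ A) (⋃₀ A') := by
  constructor
  · rintro w ⟨s, hs, hw⟩
    obtain ⟨s', hs', hss'⟩ := h.1 s hs
    exact (hss'.1 w hw).imp fun w' => And.imp_left fun hw' => ⟨s', hs', hw'⟩
  · rintro w' ⟨s', hs', hw'⟩
    obtain ⟨s, hs, hss'⟩ := h.2 s' hs'
    exact (hss'.2 w' hw').imp fun w => And.imp_left fun hw => ⟨s, hs, hw⟩

theorem apply_eq_iff {α : Type} {f : W → α} {f' : W' → α} :
    StateRel (fun w w' => f w = f' w') s s' ↔ f '' s = f' '' s' := by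
  rw [Set.Subset.antisymm_iff, Set.image_subset_iff, Set.image_subset_iff]
  exact and_congr_left' (forall₂_congr fun _ _ => exists_congr fun _ => and_congr_right' eq_comm)

end StateRel

/-! ### Invariance under `n`-bisimilarity -/

section Bisimilarity

variable {P : Type} {M M' : InqModel P} {w : M.W} {w' : M'.W}

theorem nBisimW_succ_iff {n : ℕ} :
    NBisimW M M' (n + 1) w w' ↔
      (∀ p, w ∈ M.V p ↔ w' ∈ M'.V p) ∧ StateRel (NBisimS M M' n) (M.Sig w) (M'.Sig w') :=
  Iff.rfl

theorem NBisimW.mem_V_iff {n : ℕ} (h : NBisimW M M' n w w') (p : P) :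
    w ∈ M.V p ↔ w' ∈ M'.V p := by
  cases n with
  | zero => exact h p
  | succ n => exact h.1 p

theorem NBisimW.symm {n : ℕ} (h : NBisimW M M' n w w') : NBisimW M' M n w' w := by
  induction n generalizing w w' with
  | zero => exact fun p => (h p).symm
  | succ n ih =>
    obtain ⟨hV, hSig⟩ := nBisimW_succ_iff.1 h
    exact nBisimW_succ_iff.2
      ⟨fun p => (hV p).symm, hSig.symm fun _ _ => StateRel.symm fun _ _ => ih⟩

theorem NBisimS.symm {n : ℕ} {s : Set M.W} {s' : Set M'.W} (h : NBisimS M M' n s s') :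
    NBisimS M' M n s' s :=
  StateRel.symm (fun _ _ => NBisimW.symm) h

theorem BisimW.symm (h : BisimW M M' w w') : BisimW M' M w' w := by
  obtain ⟨Z, hZ, hw⟩ := h
  refine ⟨fun v' v => Z v v', fun v' v hv => ?_, hw⟩
  obtain ⟨hV, hSig⟩ := hZ v v' hv
  exact ⟨fun p => (hV p).symm,
    StateRel.symm (fun _ _ => StateRel.symm fun _ _ => id) hSig⟩

theorem BisimW.nBisimW (h : BisimW M M' w w') (n : ℕ) : NBisimW M M' n w w' := by
  obtain ⟨Z, hZ, hw⟩ := h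
  induction n generalizing w w' with
  | zero => exact (hZ w w' hw).1
  | succ n ih =>
    obtain ⟨hV, hSig⟩ := hZ w w' hw
    exact nBisimW_succ_iff.2
      ⟨hV, StateRel.mono (fun _ _ => StateRel.mono fun _ _ => ih) hSig⟩

theorem NBisimS.support {φ : InqForm P} {n : ℕ} {s : Set M.W} {s' : Set M'.W}
    (h : NBisimS M M' n s s') (hφ : mdepth φ ≤ n) (hs : support M φ s) : support M' φ s' := by
  induction φ generalizing M M' n s s' with
  | atom p =>
    intro w' hw'
    obtain ⟨w, hw, hww'⟩ := h.2 w' hw'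
    exact (hww'.mem_V_iff p).1 (hs hw)
  | bot =>
    refine Set.eq_empty_of_forall_notMem fun w' hw' => ?_
    obtain ⟨w, hw, -⟩ := h.2 w' hw'
    exact Set.eq_empty_iff_forall_notMem.1 hs w hw
  | and φ ψ ihφ ihψ =>
    exact ⟨ihφ h (le_of_max_le_left hφ) hs.1, ihψ h (le_of_max_le_right hφ) hs.2⟩
  | impl φ ψ ihφ ihψ =>
    intro t' ht' htφ
    obtain ⟨t, ht, htt'⟩ := h.exists_subset ht'
    exact ihψ htt' (le_of_max_le_right hφ)
      (hs t ht (ihφ (NBisimS.symm htt') (le_of_max_le_left hφ) htφ))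
  | idisj φ ψ ihφ ihψ =>
    exact hs.imp (ihφ h (le_of_max_le_left hφ)) (ihψ h (le_of_max_le_right hφ))
  | box φ ih =>
    obtain ⟨n, rfl⟩ := Nat.exists_eq_add_of_le' ((Nat.le_add_left 1 _).trans hφ)
    intro w' hw'
    obtain ⟨w, hw, hww'⟩ := h.2 w' hw'
    exact ih (nBisimW_succ_iff.1 hww').2.sUnion (Nat.le_of_succ_le_succ hφ) (hs w hw)
  | boxplus φ ih =>
    obtain ⟨n, rfl⟩ := Nat.exists_eq_add_of_le' ((Nat.le_add_left 1 _).trans hφ)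
    intro w' hw' t' ht'
    obtain ⟨w, hw, hww'⟩ := h.2 w' hw'
    obtain ⟨t, ht, htt'⟩ := (nBisimW_succ_iff.1 hww').2.2 t' ht'
    exact ih htt' (Nat.le_of_succ_le_succ hφ) (hs w hw t ht)

theorem NBisimW.truth_iff {φ : InqForm P} (h : NBisimW M M' (mdepth φ) w w') :
    truth M w φ ↔ truth M' w' φ :=
  ⟨NBisimS.support (StateRel.singleton h) le_rfl,
    NBisimS.support (StateRel.singleton h.symm) le_rfl⟩

end Bisimilarity

/-! ### Types -/

/-- Bisimulation types of depth `n`: the canonical invariants of worlds up to `n`-bisimilarity.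
A type of positive depth consists of a set of atoms and a family of sets of types of the preceding
depth. -/
def InqType (P : Type) : ℕ → Type
  | 0 => Set P
  | n + 1 => Set P × Set (Set (InqType P n))

instance InqType.finite {P : Type} [Finite P] (n : ℕ) : Finite (InqType P n) := by
  induction n with
  | zero => exact inferInstanceAs (Finite (Set P))
  | succ n ih => exact inferInstanceAs (Finite (Set P × Set (Set (InqType P n))))

/-- The type of depth `n` of a world: its atoms and the sets of types realised by its successor
states. -/
def InqModel.type {P : Type} (M : InqModel P) : (n : ℕ) → M.W → InqType P n
  | 0, w => {p | w ∈ M.V p}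
  | n + 1, w => ({p | w ∈ M.V p}, (M.type n '' ·) '' M.Sig w)

theorem nBisimW_iff_type_eq {P : Type} {M M' : InqModel P} {n : ℕ} {w : M.W} {w' : M'.W} :
    NBisimW M M' n w w' ↔ M.type n w = M'.type n w' := by
  induction n generalizing w w' with
  | zero => exact Set.ext_iff.symm
  | succ n ih =>
    have nBisimW_eq : NBisimW M M' n = fun w w' => M.type n w = M'.type n w' := by
      ext
      exact ih
    have nBisimS_eq : NBisimS M M' n = fun s s' => M.type n '' s = M'.type n '' s' := by
      ext
      rw [NBisimS, nBisimW_eq, StateRel.apply_eq_iff]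
    rw [nBisimW_succ_iff, nBisimS_eq, StateRel.apply_eq_iff]
    exact (and_congr_left' Set.ext_iff.symm).trans Prod.mk_inj.symm

theorem InqModel.mem_image_image_Sig_iff {P α : Type} (M : InqModel P) (f : M.W → α) (w : M.W)
    (Θ : Set α) : Θ ∈ (f '' ·) '' M.Sig w ↔ ∃ s ∈ M.Sig w, Θ ⊆ f '' s := by
  constructor
  · rintro ⟨s, hs, rfl⟩
    exact ⟨s, hs, Set.Subset.rfl⟩
  · rintro ⟨s, hs, hΘ⟩
    obtain ⟨t, ht, rfl⟩ := Set.subset_image_iff.1 hΘ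
    exact ⟨t, M.Sig_downward w s hs t ht, rfl⟩

/-! ### Boolean algebras of definable classes -/

section Definability

variable {X : Type*} {L : BooleanSubalgebra (Set X)}

/-- The Boolean subalgebra given by a set that contains `⊥` and is closed under implication, the
connectives that are primitive in both logics. -/
def booleanSubalgebraOfHImp {α : Type*} [BooleanAlgebra α] (D : Set α) (bot_mem : ⊥ ∈ D)
    (himp_mem : ∀ a ∈ D, ∀ b ∈ D, a ⇨ b ∈ D) : BooleanSubalgebra α :=
  have compl_mem {a : α} (ha : a ∈ D) : aᶜ ∈ D := himp_bot a ▸ himp_mem a ha ⊥ bot_mem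
  have sup_mem {a b : α} (ha : a ∈ D) (hb : b ∈ D) : a ⊔ b ∈ D := by
    simpa only [himp_eq, compl_compl, sup_comm] using himp_mem _ (compl_mem ha) _ hb
  { carrier := D
    supClosed' := fun _ ha _ hb => sup_mem ha hb
    infClosed' := fun a ha b hb => by
      simpa only [compl_sup, compl_compl] using compl_mem (sup_mem (compl_mem ha) (compl_mem hb))
    compl_mem' := compl_mem
    bot_mem' := bot_mem }

theorem preimage_mem_of_fibers_mem {α : Type*} [Finite α] {f : X → α}
    (hf : ∀ a, {x | f x = a} ∈ L) (T : Set α) : f ⁻¹' T ∈ L := by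
  have hT : f ⁻¹' T = ⨆ a ∈ T, {x | f x = a} := by ext; simp
  exact hT ▸ BooleanSubalgebra.biSup_mem T.toFinite fun a _ => hf a

theorem fiber_mem_of_setOf_mem_mem {ι : Type*} [Finite ι] {f : X → Set ι}
    (hf : ∀ i, {x | i ∈ f x} ∈ L) (A : Set ι) : {x | f x = A} ∈ L := by
  have hA : {x | f x = A} = ⨅ i, {x | i ∈ f x ↔ i ∈ A} := by ext; simp [Set.ext_iff]
  refine hA ▸ BooleanSubalgebra.iInf_mem fun i => ?_
  by_cases hi : i ∈ A
  · simpa only [hi, iff_true] using hf i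
  · simp only [hi, iff_false]
    exact BooleanSubalgebra.compl_mem (hf i)

end Definability

/-- World-pointed inquisitive modal models. -/
abbrev PointedInqModel (P : Type) := Σ M : InqModel P, M.W

theorem setOf_type_succ_eq_mem {P : Type} [Finite P] {X : Type*} {L : BooleanSubalgebra (Set X)}
    {π : X → PointedInqModel P} {n : ℕ} (hatom : ∀ p, {x | (π x).2 ∈ (π x).1.V p} ∈ L)
    (hstate : ∀ Θ, {x | Θ ∈ ((π x).1.type n '' ·) '' (π x).1.Sig (π x).2} ∈ L)
    (τ : InqType P (n + 1)) : {x | (π x).1.type (n + 1) (π x).2 = τ} ∈ L := by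
  have hτ : {x | (π x).1.type (n + 1) (π x).2 = τ} =
      {x | {p | (π x).2 ∈ (π x).1.V p} = τ.1} ⊓
        {x | ((π x).1.type n '' ·) '' (π x).1.Sig (π x).2 = τ.2} :=
    Set.ext fun _ => Prod.ext_iff
  rw [hτ]
  exact BooleanSubalgebra.inf_mem (fiber_mem_of_setOf_mem_mem hatom _)
    (fiber_mem_of_setOf_mem_mem hstate _)

/-! ### Types are definable in InqML -/

section InqDefinable

variable {P : Type} {M : InqModel P}

theorem support_empty (φ : InqForm P) : support M φ ∅ := by
  induction φ with
  | atom p => exact Set.empty_subset _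
  | bot => rfl
  | and φ ψ ihφ ihψ => exact ⟨ihφ, ihψ⟩
  | impl φ ψ _ ihψ => exact fun t ht _ => Set.subset_empty_iff.1 ht ▸ ihψ
  | idisj φ ψ ihφ _ => exact Or.inl ihφ
  | box φ _ => exact fun _ hw => hw.elim
  | boxplus φ _ => exact fun _ hw => hw.elim

theorem support_antitone (φ : InqForm P) : Antitone (support M φ) := by
  intro s t hst h
  induction φ with
  | atom p => exact hst.trans h
  | bot => exact Set.subset_eq_empty hst h
  | and φ ψ ihφ ihψ => exact ⟨ihφ h.1, ihψ h.2⟩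
  | impl φ ψ _ _ => exact fun u hu => h u (hu.trans hst)
  | idisj φ ψ ihφ ihψ => exact h.imp ihφ ihψ
  | box φ _ => exact fun w hw => h w (hst hw)
  | boxplus φ _ => exact fun w hw => h w (hst hw)

theorem truth_impl_iff {φ ψ : InqForm P} {w : M.W} :
    truth M w (.impl φ ψ) ↔ (truth M w φ → truth M w ψ) := by
  refine ⟨fun h => h {w} Set.Subset.rfl, fun h t ht hφ => ?_⟩
  obtain rfl | rfl := Set.subset_singleton_iff_eq.1 ht
  · exact support_empty ψ
  · exact h hφ

theorem support_impl_bot_iff {φ : InqForm P} {s : Set M.W} :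
    support M (.impl φ .bot) s ↔ ∀ w ∈ s, ¬ truth M w φ := by
  constructor
  · exact fun h w hw hφ =>
      Set.singleton_ne_empty w (h {w} (Set.singleton_subset_iff.2 hw) hφ)
  · exact fun h t ht hφ => Set.eq_empty_of_forall_notMem fun w hw =>
      h w (ht hw) (support_antitone φ (Set.singleton_subset_iff.2 hw) hφ)

theorem truth_boxplus_iff {φ : InqForm P} {w : M.W} :
    truth M w (.boxplus φ) ↔ ∀ t ∈ M.Sig w, support M φ t := by
  simp only [truth, support, Set.mem_singleton_iff, forall_eq]

theorem exists_support_iff_exists_mem {ι : Type*} {I : Finset ι} (hI : I.Nonempty)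
    (f : ι → InqForm P) :
    ∃ φ, ∀ (M : InqModel P) (s : Set M.W), support M φ s ↔ ∃ i ∈ I, support M (f i) s := by
  induction hI using Finset.Nonempty.cons_induction with
  | singleton i => exact ⟨f i, fun M s => by simp only [Finset.mem_singleton, exists_eq_left]⟩
  | cons i I hi _ ih =>
    obtain ⟨φ, hφ⟩ := ih
    refine ⟨.idisj (f i) φ, fun M s => ?_⟩
    simp only [support, hφ, Finset.mem_cons, exists_eq_or_imp]

/-- The Boolean algebra of classes of world-pointed models defined by an InqML formula. -/
def inqDefinable (P : Type) : BooleanSubalgebra (Set (PointedInqModel P)) :=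
  booleanSubalgebraOfHImp (Set.range fun φ => {x | truth x.1 x.2 φ})
    ⟨.bot, Set.eq_empty_of_forall_notMem fun x => Set.singleton_ne_empty x.2⟩ <| by
      rintro _ ⟨φ, rfl⟩ _ ⟨ψ, rfl⟩
      exact ⟨.impl φ ψ, Set.ext fun _ => truth_impl_iff⟩

theorem setOf_mem_image_type_mem_inqDefinable [Finite P] {n : ℕ}
    (htype : ∀ τ, {x | x.1.type n x.2 = τ} ∈ inqDefinable P) (Θ : Set (InqType P n)) :
    {x : PointedInqModel P | Θ ∈ (x.1.type n '' ·) '' x.1.Sig x.2} ∈ inqDefinable P := by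
  rcases Θ.eq_empty_or_nonempty with rfl | hΘ
  · convert BooleanSubalgebra.top_mem (L := inqDefinable P)
    refine Set.eq_univ_of_forall fun x => (x.1.mem_image_image_Sig_iff _ _ _).2 ?_
    exact (x.1.Sig_nonempty x.2).imp fun s hs => ⟨hs, Set.empty_subset _⟩
  choose χ hχ using htype
  have truth_χ_iff (M : InqModel P) (w : M.W) (τ : InqType P n) :
      truth M w (χ τ) ↔ M.type n w = τ :=
    Set.ext_iff.1 (hχ τ) ⟨M, w⟩
  -- A state supports `φ` iff it omits one of the types in `Θ`.
  obtain ⟨φ, hφ⟩ := exists_support_iff_exists_mem (Θ.toFinite.toFinset_nonempty.2 hΘ)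
    fun τ => .impl (χ τ) .bot
  refine BooleanSubalgebra.compl_mem_iff.1 ⟨.boxplus φ, Set.ext fun ⟨M, w⟩ => ?_⟩
  change truth M w (.boxplus φ) ↔ ¬ Θ ∈ (M.type n '' ·) '' M.Sig w
  rw [M.mem_image_image_Sig_iff]
  simp only [truth_boxplus_iff, hφ, support_impl_bot_iff, truth_χ_iff, Set.Finite.mem_toFinset,
    Set.subset_def, Set.mem_image]
  push Not
  rfl

theorem setOf_type_eq_mem_inqDefinable [Finite P] (n : ℕ) (τ : InqType P n) :
    {x | x.1.type n x.2 = τ} ∈ inqDefinable P := by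
  have hatom (p : P) : {x | x.2 ∈ x.1.V p} ∈ inqDefinable P :=
    ⟨.atom p, Set.ext fun _ => Set.singleton_subset_iff⟩
  induction n with
  | zero => exact fiber_mem_of_setOf_mem_mem hatom τ
  | succ n ih =>
    exact setOf_type_succ_eq_mem (π := id) hatom (setOf_mem_image_type_mem_inqDefinable ih) τ

end InqDefinable

/-! ### Types are definable in first-order logic -/

/-- Satisfaction in a relational model, viewed as a two-sorted first-order structure. -/
abbrev RelModel.sat {P : Type} (𝔐 : RelModel P) {n m : ℕ} (φ : FO P n m) (a : Fin n → 𝔐.W)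
    (b : Fin m → 𝔐.S) : Prop :=
  FOsat 𝔐.S 𝔐.E 𝔐.V φ a b

/-- Relational models with an assignment for `n` world variables and `m` state variables. -/
abbrev AssignedRelModel (P : Type) (n m : ℕ) :=
  Σ 𝔐 : RelModel P, (Fin n → 𝔐.W) × (Fin m → 𝔐.S)

section FODefinable

variable {P : Type} {n m : ℕ}

/-- The Boolean algebra of classes of assigned models defined by a first-order formula. -/
def foDefinable (P : Type) (n m : ℕ) : BooleanSubalgebra (Set (AssignedRelModel P n m)) :=
  booleanSubalgebraOfHImp (Set.range fun φ => {x | x.1.sat φ x.2.1 x.2.2}) ⟨.fal, rfl⟩ <| by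
    rintro _ ⟨φ, rfl⟩ _ ⟨ψ, rfl⟩
    exact ⟨.imp φ ψ, rfl⟩

theorem setOf_exists_world_mem_foDefinable {A : Set (AssignedRelModel P (n + 1) m)}
    (hA : A ∈ foDefinable P (n + 1) m) :
    {x | ∃ w, ⟨x.1, Fin.cons w x.2.1, x.2.2⟩ ∈ A} ∈ foDefinable P n m := by
  obtain ⟨φ, hφ⟩ := BooleanSubalgebra.compl_mem hA
  refine BooleanSubalgebra.compl_mem_iff.1 ⟨.allW φ, Set.ext fun x => ?_⟩
  refine (forall_congr' fun w => Set.ext_iff.1 hφ ⟨x.1, Fin.cons w x.2.1, x.2.2⟩).trans ?_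
  exact not_exists.symm

theorem setOf_exists_state_mem_foDefinable {A : Set (AssignedRelModel P n (m + 1))}
    (hA : A ∈ foDefinable P n (m + 1)) :
    {x | ∃ s, ⟨x.1, x.2.1, Fin.cons s x.2.2⟩ ∈ A} ∈ foDefinable P n m := by
  obtain ⟨φ, hφ⟩ := BooleanSubalgebra.compl_mem hA
  refine BooleanSubalgebra.compl_mem_iff.1 ⟨.allS φ, Set.ext fun x => ?_⟩
  refine (forall_congr' fun s => Set.ext_iff.1 hφ ⟨x.1, x.2.1, Fin.cons s x.2.2⟩).trans ?_
  exact not_exists.symm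

theorem setOf_image_type_eq_mem_foDefinable [Finite P] {k : ℕ}
    (htype : ∀ τ, {x | x.1.toInq.type k (x.2.1 0) = τ} ∈ foDefinable P (n + 1) (m + 1))
    (Θ : Set (InqType P k)) :
    {x | x.1.toInq.type k '' (x.2.2 0).1 = Θ} ∈ foDefinable P n (m + 1) := by
  refine fiber_mem_of_setOf_mem_mem (fun τ => ?_) Θ
  have hmem : {x | x.2.1 0 ∈ (x.2.2 0).1} ∈ foDefinable P (n + 1) (m + 1) :=
    ⟨.mem 0 0, rfl⟩
  exact setOf_exists_world_mem_foDefinable (BooleanSubalgebra.inf_mem hmem (htype τ))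

theorem setOf_mem_image_type_mem_foDefinable [Finite P] {k : ℕ} (i : Fin n)
    (htype : ∀ τ, {x | x.1.toInq.type k (x.2.1 0) = τ} ∈ foDefinable P (n + 1) (m + 1))
    (Θ : Set (InqType P k)) :
    {x | Θ ∈ (x.1.toInq.type k '' ·) '' x.1.E (x.2.1 i)} ∈ foDefinable P n m := by
  have hrel : {x | (x.2.2 0).1 ∈ x.1.E (x.2.1 i)} ∈ foDefinable P n (m + 1) :=
    ⟨.rel i 0, rfl⟩
  convert setOf_exists_state_mem_foDefinable
    (BooleanSubalgebra.inf_mem hrel (setOf_image_type_eq_mem_foDefinable htype Θ)) using 1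
  ext x
  exact ⟨fun ⟨s, hs, hΘ⟩ => ⟨⟨s, x.1.E_sub _ hs⟩, hs, hΘ⟩, fun ⟨s, hs, hΘ⟩ => ⟨s.1, hs, hΘ⟩⟩

theorem setOf_type_eq_mem_foDefinable [Finite P] (k : ℕ) (i : Fin n) (τ : InqType P k) :
    {x | x.1.toInq.type k (x.2.1 i) = τ} ∈ foDefinable P n m := by
  have hatom (p : P) : {x | x.2.1 i ∈ x.1.V p} ∈ foDefinable P n m := ⟨.atom p i, rfl⟩
  induction k generalizing n m with
  | zero => exact fiber_mem_of_setOf_mem_mem hatom τ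
  | succ k ih =>
    exact setOf_type_succ_eq_mem
      (π := fun x : AssignedRelModel P n m => ⟨x.1.toInq, x.2.1 i⟩) hatom
      (setOf_mem_image_type_mem_foDefinable i fun τ => ih 0 τ fun p => ⟨.atom p 0, rfl⟩) τ

end FODefinable

/-! ### Products with a clock -/

theorem prod_singleton_eq_prod_singleton_iff {α β : Type*} {s t : Set α} {g h : β} :
    s ×ˢ {g} = t ×ˢ {h} ↔ s = t ∧ (s = ∅ ∨ g = h) := by
  rw [Set.prod_eq_prod_iff]
  simp only [Set.singleton_ne_empty, or_false, Set.singleton_eq_singleton_iff]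
  grind

theorem StateRel.prod_singleton {W W' G : Type} {Z : W → W' → Prop} {s : Set W} {s' : Set W'}
    {Z' : W × G → W' × G → Prop} {g : G} (h : StateRel Z s s')
    (hZ : ∀ w w', Z w w' → Z' (w, g) (w', g)) : StateRel Z' (s ×ˢ {g}) (s' ×ˢ {g}) := by
  simp only [Set.prod_singleton]
  exact ⟨Set.forall_mem_image.2 fun w hw => Set.exists_mem_image.2 <|
      (h.1 w hw).imp fun w' => And.imp_right (hZ w w'),
    Set.forall_mem_image.2 fun w' hw' => Set.exists_mem_image.2 <|
      (h.2 w' hw').imp fun w => And.imp_right (hZ w w')⟩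

section Clock

variable {P G : Type}

/-- The product of a relational model with a clock, a deterministic transition system that may halt.
The states are all sets of worlds at a single position of the clock, so that the product is locally
full; one modal step advances the clock, and only the empty state is accessible once it has
stopped. -/
abbrev RelModel.withClock [Nonempty G] (𝔐 : RelModel P) (next : G → Option G) : RelModel P where
  W := 𝔐.W × G
  S := {t | ∃ s g, t = s ×ˢ {g}}
  E x := insert ∅ {t | ∃ s ∈ 𝔐.E x.1, ∃ g ∈ next x.2, t = s ×ˢ {g}}
  V p := {x | x.1 ∈ 𝔐.V p}
  wNonempty := have := 𝔐.wNonempty; inferInstance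
  sNonempty := ⟨_, ∅, Classical.arbitrary G, rfl⟩
  E_sub := by
    rintro x _ (rfl | ⟨s, -, g, -, rfl⟩)
    exacts [⟨∅, x.2, Set.empty_prod.symm⟩, ⟨s, g, rfl⟩]
  E_nonempty _ := Set.insert_nonempty _ _
  downward := by
    rintro x _ (rfl | ⟨s, hs, g, hg, rfl⟩) t ht
    · obtain rfl := Set.subset_empty_iff.1 ht
      exact ⟨⟨∅, x.2, Set.empty_prod.symm⟩, Or.inl rfl⟩
    · rw [Set.prod_singleton, Set.subset_image_iff] at ht
      obtain ⟨t, ht, rfl⟩ := ht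
      rw [← Set.prod_singleton]
      exact ⟨⟨t, g, rfl⟩, Or.inr ⟨t, (𝔐.downward x.1 s hs t ht).2, g, hg, rfl⟩⟩

/-- The clock stops after at most the given number of steps. -/
def StopsWithin (next : G → Option G) : ℕ → G → Prop
  | 0, g => next g = none
  | n + 1, g => ∀ h ∈ next g, StopsWithin next n h

/-- The bisimulation between clock products: worlds at a common position of the clock that are
`n`-bisimilar for some `n` within which the clock stops. -/
def StoppingBisim (𝔐 𝔐' : RelModel P) (next : G → Option G) (x : 𝔐.W × G)
    (x' : 𝔐'.W × G) : Prop :=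
  x.2 = x'.2 ∧ ∃ n, StopsWithin next n x.2 ∧ NBisimW 𝔐.toInq 𝔐'.toInq n x.1 x'.1

theorem StoppingBisim.symm {𝔐 𝔐' : RelModel P} {next : G → Option G} {x : 𝔐.W × G}
    {x' : 𝔐'.W × G} (h : StoppingBisim 𝔐 𝔐' next x x') :
    StoppingBisim 𝔐' 𝔐 next x' x :=
  have ⟨hpos, n, hwithin, hn⟩ := h
  ⟨hpos.symm, n, hpos ▸ hwithin, hn.symm⟩

variable [Nonempty G] (𝔐 : RelModel P) {next : G → Option G}

theorem prod_singleton_mem_withClock_E_iff {x : 𝔐.W × G} {s : Set 𝔐.W} {g : G} :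
    s ×ˢ {g} ∈ (𝔐.withClock next).E x ↔ s = ∅ ∨ s ∈ 𝔐.E x.1 ∧ g ∈ next x.2 := by
  constructor
  · rintro (h | ⟨t, ht, h, hh, heq⟩)
    · exact .inl ((Set.prod_eq_empty_iff.1 h).resolve_right (Set.singleton_ne_empty g))
    · obtain ⟨rfl, hs | rfl⟩ := prod_singleton_eq_prod_singleton_iff.1 heq
      exacts [.inl hs, .inr ⟨ht, hh⟩]
  · rintro (rfl | ⟨hs, hg⟩)
    exacts [.inl Set.empty_prod, .inr ⟨s, hs, g, hg, rfl⟩]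

theorem locallyFull_withClock : LocallyFull (𝔐.withClock next) := by
  intro x t ht
  have mem_next (y) (hy : y ∈ t) : y.2 ∈ next x.2 := by
    obtain ⟨_, rfl | ⟨s, -, g, hg, rfl⟩, hyt⟩ := ht hy
    exacts [hyt.elim, hyt.2 ▸ hg]
  obtain rfl | ⟨y, hy⟩ := t.eq_empty_or_nonempty
  · exact ⟨∅, x.2, Set.empty_prod.symm⟩
  · have snd_eq (z) (hz : z ∈ t) : z.2 = y.2 := Option.mem_unique (mem_next z hz) (mem_next y hy)
    refine ⟨Prod.fst '' t, y.2, Set.Subset.antisymm (fun z hz => ⟨⟨z, hz, rfl⟩, snd_eq z hz⟩) ?_⟩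
    rintro z ⟨⟨z', hz', hfst⟩, hsnd⟩
    obtain rfl : z' = z := Prod.ext hfst ((snd_eq z' hz').trans hsnd.symm)
    exact hz'

theorem finite_withClock [Finite 𝔐.W] [Finite G] : Finite (𝔐.withClock next).W :=
  inferInstanceAs (Finite (𝔐.W × G))

theorem bisimW_withClock {T : Set G} (hT : ∀ g ∈ T, ∃ h ∈ T, h ∈ next g) (w : 𝔐.W) {g : G}
    (hg : g ∈ T) : BisimW 𝔐.toInq (𝔐.withClock next).toInq w (w, g) := by
  refine ⟨fun w x => x.1 = w ∧ x.2 ∈ T, ?_, rfl, hg⟩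
  rintro _ ⟨w, g⟩ ⟨rfl, hg⟩
  have stateRel_prod (s : Set 𝔐.W) {h : G} (hh : h ∈ T) :
      StateRel (fun w (x : 𝔐.W × G) => x.1 = w ∧ x.2 ∈ T) s (s ×ˢ {h}) :=
    ⟨fun w hw => ⟨(w, h), ⟨hw, rfl⟩, rfl, hh⟩,
      fun x hx => ⟨x.1, hx.1, rfl, Set.mem_of_eq_of_mem hx.2 hh⟩⟩
  refine ⟨fun _ => Iff.rfl, fun s hs => ?_, ?_⟩
  · obtain ⟨h, hh, hgh⟩ := hT g hg
    exact ⟨_, .inr ⟨s, hs, h, hgh, rfl⟩, stateRel_prod s hh⟩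
  · rintro _ (rfl | ⟨s, hs, h, hgh, rfl⟩)
    · obtain ⟨s, hs⟩ := 𝔐.E_nonempty w
      exact ⟨∅, (𝔐.downward w s hs ∅ (Set.empty_subset s)).2, StateRel.empty⟩
    · obtain ⟨h', hh', hgh'⟩ := hT g hg
      exact ⟨s, hs, stateRel_prod s (Option.mem_unique hgh hgh' ▸ hh')⟩

variable {𝔐} {𝔐' : RelModel P}

theorem StoppingBisim.exists_mem_withClock_E {x : 𝔐.W × G} {x' : 𝔐'.W × G}
    (h : StoppingBisim 𝔐 𝔐' next x x') {t : Set (𝔐.W × G)} (ht : t ∈ (𝔐.withClock next).E x) :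
    ∃ t' ∈ (𝔐'.withClock next).E x', StateRel (StoppingBisim 𝔐 𝔐' next) t t' := by
  obtain ⟨hpos, n, hwithin, hn⟩ := h
  rcases ht with rfl | ⟨s, hs, g, hg, rfl⟩
  · exact ⟨∅, .inl rfl, StateRel.empty⟩
  cases n with
  | zero => exact (Option.not_mem_none g (hwithin ▸ hg)).elim
  | succ n =>
    obtain ⟨s', hs', hss'⟩ := hn.2.1 s hs
    exact ⟨s' ×ˢ {g}, .inr ⟨s', hs', g, hpos ▸ hg, rfl⟩,
      hss'.prod_singleton fun _ _ hw => ⟨rfl, n, hwithin g hg, hw⟩⟩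

theorem NBisimW.bisimW_withClock {n : ℕ} {w : 𝔐.W} {w' : 𝔐'.W} {g : G}
    (h : NBisimW 𝔐.toInq 𝔐'.toInq n w w') (hg : StopsWithin next n g) :
    BisimW (𝔐.withClock next).toInq (𝔐'.withClock next).toInq (w, g) (w', g) := by
  refine ⟨StoppingBisim 𝔐 𝔐' next, fun x x' hx => ?_, rfl, n, hg, h⟩
  have ⟨_, _, _, hn⟩ := hx
  refine ⟨hn.mem_V_iff, fun t => hx.exists_mem_withClock_E, fun t' ht' => ?_⟩
  obtain ⟨t, ht, htt'⟩ := hx.symm.exists_mem_withClock_E ht'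
  exact ⟨t, ht, htt'.symm fun _ _ => StoppingBisim.symm⟩

end Clock

/-! ### Back-and-forth equivalence of clock positions -/

/-- Quantifier rank, counting quantifiers of both sorts. -/
def FO.rank {P : Type} {n m : ℕ} : FO P n m → ℕ
  | .imp φ ψ => max φ.rank ψ.rank
  | .allW φ => φ.rank + 1
  | .allS φ => φ.rank + 1
  | _ => 0

section BackAndForth

variable {G : Type}

/-- `R` relates pebbled positions of a clock in a way that preserves equality and transitions. -/
def IsPartialIso (next : G → Option G) (R : G → G → Prop) : Prop :=
  ∀ ⦃g g' h h'⦄, R g g' → R h h' → (g = h ↔ g' = h') ∧ (h ∈ next g ↔ h' ∈ next g')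

/-- The duplicator wins the Ehrenfeucht–Fraïssé game with the given number of rounds on two copies
of a clock, from the pebbled positions related by `R`. -/
def BackAndForth (next : G → Option G) : ℕ → (G → G → Prop) → Prop
  | 0, R => IsPartialIso next R
  | r + 1, R => IsPartialIso next R ∧
      (∀ g, ∃ g', ∃ R' ≥ R, R' g g' ∧ BackAndForth next r R') ∧
      (∀ g', ∃ g, ∃ R' ≥ R, R' g g' ∧ BackAndForth next r R')

theorem BackAndForth.isPartialIso {next : G → Option G} {r : ℕ} {R : G → G → Prop}
    (h : BackAndForth next r R) : IsPartialIso next R := by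
  cases r with
  | zero => exact h
  | succ r => exact h.1

variable [Nonempty G] {P : Type} {𝔐 : RelModel P} {next : G → Option G} {n m : ℕ}
  {a a' : Fin n → 𝔐.W × G} {b b' : Fin m → (𝔐.withClock next).S} {R R' : G → G → Prop}

/-- Assignments in a clock product that pick the same worlds and states of the original model, at
clock positions related by `R`. -/
structure AgreeUpTo (R : G → G → Prop) (a a' : Fin n → 𝔐.W × G)
    (b b' : Fin m → (𝔐.withClock next).S) : Prop where
  world : ∀ i, (a i).1 = (a' i).1 ∧ R (a i).2 (a' i).2
  state : ∀ j, ∃ s g g', R g g' ∧ (b j).1 = s ×ˢ {g} ∧ (b' j).1 = s ×ˢ {g'}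

namespace AgreeUpTo

theorem mono (h : AgreeUpTo R a a' b b') (hR : R ≤ R') : AgreeUpTo R' a a' b b' where
  world i := (h.world i).imp_right (hR _ _)
  state j := have ⟨s, g, g', hg, hb⟩ := h.state j; ⟨s, g, g', hR _ _ hg, hb⟩

theorem cons_world (h : AgreeUpTo R a a' b b') (w : 𝔐.W) {g g' : G} (hg : R g g') :
    AgreeUpTo R (Fin.cons (w, g) a) (Fin.cons (w, g') a') b b' where
  world := Fin.cases ⟨rfl, hg⟩ h.world
  state := h.state

theorem cons_state (h : AgreeUpTo R a a' b b') (s : Set 𝔐.W) {g g' : G} (hg : R g g') :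
    AgreeUpTo R a a' (Fin.cons ⟨s ×ˢ {g}, s, g, rfl⟩ b) (Fin.cons ⟨s ×ˢ {g'}, s, g', rfl⟩ b') where
  world := h.world
  state := Fin.cases ⟨s, g, g', hg, rfl, rfl⟩ h.state

variable (hR : IsPartialIso next R) (h : AgreeUpTo R a a' b b')
include hR h

theorem world_eq_iff (i j : Fin n) : a i = a j ↔ a' i = a' j := by
  rw [Prod.ext_iff, Prod.ext_iff, (h.world i).1, (h.world j).1,
    (hR (h.world i).2 (h.world j).2).1]

theorem state_eq_iff (i j : Fin m) : b i = b j ↔ b' i = b' j := by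
  obtain ⟨s, g, g', hg, hs, hs'⟩ := h.state i
  obtain ⟨t, h, h', hh, ht, ht'⟩ := h.state j
  rw [Subtype.ext_iff, Subtype.ext_iff, hs, ht, hs', ht', prod_singleton_eq_prod_singleton_iff,
    prod_singleton_eq_prod_singleton_iff, (hR hg hh).1]

theorem mem_E_iff (i : Fin n) (j : Fin m) :
    (b j).1 ∈ (𝔐.withClock next).E (a i) ↔ (b' j).1 ∈ (𝔐.withClock next).E (a' i) := by
  obtain ⟨s, g, g', hg, hs, hs'⟩ := h.state j
  rw [hs, hs', prod_singleton_mem_withClock_E_iff, prod_singleton_mem_withClock_E_iff,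
    (h.world i).1, (hR (h.world i).2 hg).2]

theorem mem_state_iff (i : Fin n) (j : Fin m) : a i ∈ (b j).1 ↔ a' i ∈ (b' j).1 := by
  obtain ⟨s, g, g', hg, hs, hs'⟩ := h.state j
  rw [hs, hs', Set.mem_prod, Set.mem_prod, Set.mem_singleton_iff, Set.mem_singleton_iff,
    (h.world i).1, (hR (h.world i).2 hg).1]

end AgreeUpTo

theorem BackAndForth.sat_iff {r : ℕ} (hR : BackAndForth next r R) {φ : FO P n m}
    (hφ : φ.rank ≤ r) (h : AgreeUpTo R a a' b b') :
    (𝔐.withClock next).sat φ a b ↔ (𝔐.withClock next).sat φ a' b' := by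
  induction φ generalizing r R with
  | eqW i j => exact h.world_eq_iff hR.isPartialIso i j
  | eqS i j => exact h.state_eq_iff hR.isPartialIso i j
  | rel i j => exact h.mem_E_iff hR.isPartialIso i j
  | mem i j => exact h.mem_state_iff hR.isPartialIso i j
  | atom p i => exact iff_of_eq (congrArg (· ∈ 𝔐.V p) (h.world i).1)
  | fal => exact Iff.rfl
  | imp φ ψ ihφ ihψ =>
    exact imp_congr (ihφ hR (le_of_max_le_left hφ) h) (ihψ hR (le_of_max_le_right hφ) h)
  | allW φ ih =>
    obtain ⟨r, rfl⟩ := Nat.exists_eq_add_of_le' ((Nat.le_add_left 1 _).trans hφ)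
    obtain ⟨-, forth, back⟩ := hR
    replace hφ := Nat.le_of_succ_le_succ hφ
    constructor
    · rintro hsat ⟨w, g'⟩
      obtain ⟨g, R', hle, hg, hR'⟩ := back g'
      exact (ih hR' hφ ((h.mono hle).cons_world w hg)).1 (hsat (w, g))
    · rintro hsat ⟨w, g⟩
      obtain ⟨g', R', hle, hg, hR'⟩ := forth g
      exact (ih hR' hφ ((h.mono hle).cons_world w hg)).2 (hsat (w, g'))
  | allS φ ih =>
    obtain ⟨r, rfl⟩ := Nat.exists_eq_add_of_le' ((Nat.le_add_left 1 _).trans hφ)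
    obtain ⟨-, forth, back⟩ := hR
    replace hφ := Nat.le_of_succ_le_succ hφ
    constructor
    · rintro hsat ⟨_, s, g', rfl⟩
      obtain ⟨g, R', hle, hg, hR'⟩ := back g'
      exact (ih hR' hφ ((h.mono hle).cons_state s hg)).1 (hsat ⟨s ×ˢ {g}, s, g, rfl⟩)
    · rintro hsat ⟨_, s, g, rfl⟩
      obtain ⟨g', R', hle, hg, hR'⟩ := forth g
      exact (ih hR' hφ ((h.mono hle).cons_state s hg)).2 (hsat ⟨s ×ˢ {g'}, s, g', rfl⟩)

end BackAndForth

/-! ### A looping and a stopping clock -/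

section Countdown

variable {ℓ : ℕ}

/-- A clock with two components, each counting down from `ℓ`: at `0`, the component tagged `true`
loops (by truncated subtraction) and the one tagged `false` stops. -/
def countdown (ℓ : ℕ) (g : Fin (ℓ + 1) × Bool) : Option (Fin (ℓ + 1) × Bool) :=
  if g = (0, false) then none else some (⟨g.1 - 1, by omega⟩, g.2)

theorem mem_countdown_iff {g h : Fin (ℓ + 1) × Bool} :
    h ∈ countdown ℓ g ↔ g ≠ (0, false) ∧ h.1.val = g.1 - 1 ∧ h.2 = g.2 := by
  rw [countdown]
  grind [Prod.ext_iff, Fin.ext_iff]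

theorem stopsWithin_countdown {n : ℕ} {i : Fin (ℓ + 1)} (hi : i.val ≤ n) :
    StopsWithin (countdown ℓ) n (i, false) := by
  induction n generalizing i with
  | zero =>
    obtain rfl : i = 0 := Fin.ext (Nat.le_zero.1 hi)
    exact if_pos rfl
  | succ n ih =>
    rintro ⟨j, _⟩ hj
    obtain ⟨-, hji, rfl⟩ := mem_countdown_iff.1 hj
    exact ih (by grind)

/-- Positions at distance at least `t` from the end are related across the two components, and
positions at distance at most `t - d` within each component; the gap of size `d` hides the
difference. -/
def MirrorAbove (t d : ℕ) (g g' : Fin (ℓ + 1) × Bool) : Prop :=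
  g.1 = g'.1 ∧ (t ≤ g.1 ∧ g'.2 = !g.2 ∨ g.1 + d ≤ t ∧ g'.2 = g.2)

theorem MirrorAbove.symm {t d : ℕ} {g g' : Fin (ℓ + 1) × Bool} (h : MirrorAbove t d g g') :
    MirrorAbove t d g' g := by
  grind [MirrorAbove]

theorem isPartialIso_mirrorAbove {t d : ℕ} (hd : 2 ≤ d) (hdt : d ≤ t) :
    IsPartialIso (countdown ℓ) (MirrorAbove t d) := by
  intro g g' h h' hg hh
  rw [mem_countdown_iff, mem_countdown_iff]
  grind [MirrorAbove, Prod.ext_iff, Fin.ext_iff]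

theorem exists_mirrorAbove {t d : ℕ} (hdt : 2 * d ≤ t) (g : Fin (ℓ + 1) × Bool) :
    ∃ t' ≥ d, ∃ g', MirrorAbove (ℓ := ℓ) t (2 * d) ≤ MirrorAbove t' d ∧ MirrorAbove t' d g g' := by
  -- The half of the gap in which `g` may lie is given up.
  by_cases hg : g.1 + d ≤ t
  · exact ⟨t, by omega, g, fun _ _ h => by grind [MirrorAbove], by grind [MirrorAbove]⟩
  · exact ⟨t - d, by omega, (g.1, !g.2), fun _ _ h => by grind [MirrorAbove],
      by grind [MirrorAbove]⟩

theorem backAndForth_mirrorAbove (r : ℕ) {t : ℕ} (ht : 2 ^ (r + 1) ≤ t) :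
    BackAndForth (countdown ℓ) r (MirrorAbove t (2 ^ (r + 1))) := by
  induction r generalizing t with
  | zero => exact isPartialIso_mirrorAbove le_rfl ht
  | succ r ih =>
    rw [pow_succ'] at ht ⊢
    have hle : 2 ≤ 2 * 2 ^ (r + 1) := Nat.le_mul_of_pos_right 2 (by positivity)
    refine ⟨isPartialIso_mirrorAbove hle ht, fun g => ?_, fun g => ?_⟩
    all_goals obtain ⟨t', ht', g', hR, hg⟩ := exists_mirrorAbove ht g
    · exact ⟨g', _, hR, hg, ih ht'⟩
    · exact ⟨g', _, hR, hg.symm, ih ht'⟩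

end Countdown

/-! ### The characterisation -/

section Characterisation

variable {P : Type} {C : RelModel P → Prop} {K : (𝔐 : RelModel P) → 𝔐.W → Prop}

/-- Membership in `K` is invariant under `n`-bisimilarity over the class `C`. -/
def NBisimInvariant (n : ℕ) (C : RelModel P → Prop) (K : (𝔐 : RelModel P) → 𝔐.W → Prop) : Prop :=
  ∀ 𝔐 𝔐' w w', C 𝔐 → C 𝔐' → NBisimW 𝔐.toInq 𝔐'.toInq n w w' → K 𝔐 w → K 𝔐' w'

theorem NBisimInvariant.exists_iff_type_mem {n : ℕ} (h : NBisimInvariant n C K) :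
    ∃ T : Set (InqType P n), ∀ 𝔐 w, C 𝔐 → (K 𝔐 w ↔ 𝔐.toInq.type n w ∈ T) := by
  refine ⟨{τ | ∃ 𝔐 w, C 𝔐 ∧ K 𝔐 w ∧ 𝔐.toInq.type n w = τ},
    fun 𝔐 w hC => ⟨fun hw => ⟨𝔐, w, hC, hw, rfl⟩, ?_⟩⟩
  rintro ⟨𝔐', w', hC', hw', htype⟩
  exact h 𝔐' 𝔐 w' w hC' hC (nBisimW_iff_type_eq.2 htype) hw'

theorem exists_inqForm_iff_nBisimInvariant [Finite P] :
    (∃ ψ, ∀ 𝔐 w, C 𝔐 → (K 𝔐 w ↔ truth 𝔐.toInq w ψ)) ↔ ∃ n, NBisimInvariant n C K := by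
  constructor
  · rintro ⟨ψ, hψ⟩
    exact ⟨mdepth ψ, fun 𝔐 𝔐' w w' hC hC' h hw =>
      (hψ 𝔐' w' hC').2 (h.truth_iff.1 ((hψ 𝔐 w hC).1 hw))⟩
  · rintro ⟨n, hn⟩
    obtain ⟨T, hT⟩ := hn.exists_iff_type_mem
    obtain ⟨ψ, hψ⟩ := preimage_mem_of_fibers_mem (setOf_type_eq_mem_inqDefinable n) T
    exact ⟨ψ, fun 𝔐 w hC =>
      (hT 𝔐 w hC).trans (Set.ext_iff.1 hψ ⟨𝔐.toInq, w⟩).symm⟩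

theorem NBisimInvariant.exists_fo [Finite P] {n : ℕ} (h : NBisimInvariant n C K) :
    ∃ φ : FO P 1 0, ∀ 𝔐 w, C 𝔐 → (K 𝔐 w ↔ satW 𝔐 φ w) := by
  obtain ⟨T, hT⟩ := h.exists_iff_type_mem
  obtain ⟨φ, hφ⟩ := preimage_mem_of_fibers_mem (setOf_type_eq_mem_foDefinable n (0 : Fin 1)) T
  exact ⟨φ, fun 𝔐 w hC =>
    (hT 𝔐 w hC).trans (Set.ext_iff.1 hφ ⟨𝔐, fun _ => w, fun i => i.elim0⟩).symm⟩

theorem satW_withClock_countdown_iff {φ : FO P 1 0} {ℓ : ℕ} (hℓ : 2 ^ (φ.rank + 1) ≤ ℓ)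
    (𝔐 : RelModel P) (w : 𝔐.W) :
    satW (𝔐.withClock (countdown ℓ)) φ (w, (Fin.last ℓ, true)) ↔
      satW (𝔐.withClock (countdown ℓ)) φ (w, (Fin.last ℓ, false)) :=
  (backAndForth_mirrorAbove φ.rank hℓ).sat_iff le_rfl
    ⟨fun _ => ⟨rfl, rfl, .inl ⟨le_rfl, rfl⟩⟩, fun j => j.elim0⟩

theorem bisimW_withClock_countdown (𝔐 : RelModel P) (w : 𝔐.W) {ℓ : ℕ} (i : Fin (ℓ + 1)) :
    BisimW 𝔐.toInq (𝔐.withClock (countdown ℓ)).toInq w (w, (i, true)) := by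
  refine bisimW_withClock 𝔐 (T := {g : Fin (ℓ + 1) × Bool | g.2 = true}) (fun g hg => ?_) w rfl
  refine ⟨(⟨g.1 - 1, by omega⟩, g.2), hg, mem_countdown_iff.2 ⟨?_, rfl, rfl⟩⟩
  rintro rfl
  exact Bool.false_ne_true hg

theorem nBisimInvariant_of_satW {φ : FO P 1 0}
    (hC : ∀ 𝔐 ℓ, C 𝔐 → C (𝔐.withClock (countdown ℓ)))
    (hφ : ∀ 𝔐 w, C 𝔐 → (K 𝔐 w ↔ satW 𝔐 φ w))
    (hK : ∀ 𝔐 𝔐' w w', K 𝔐 w → C 𝔐' → BisimW 𝔐.toInq 𝔐'.toInq w w' → K 𝔐' w') :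
    NBisimInvariant (2 ^ (φ.rank + 1)) C K := by
  intro 𝔐 𝔐' w w' h𝔐 h𝔐' h hw
  generalize hℓ : 2 ^ (φ.rank + 1) = ℓ at h
  have K_iff (𝔑 : RelModel P) (h𝔑 : C 𝔑) (v : 𝔑.W) :
      K 𝔑 v ↔ K (𝔑.withClock (countdown ℓ)) (v, (Fin.last ℓ, false)) := by
    have hclock := hC 𝔑 ℓ h𝔑
    have hbisim := bisimW_withClock_countdown 𝔑 v (Fin.last ℓ)
    calc
      K 𝔑 v ↔ K (𝔑.withClock (countdown ℓ)) (v, (Fin.last ℓ, true)) :=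
        ⟨fun hv => hK _ _ _ _ hv hclock hbisim, fun hv => hK _ _ _ _ hv h𝔑 hbisim.symm⟩
      _ ↔ K (𝔑.withClock (countdown ℓ)) (v, (Fin.last ℓ, false)) := by
        rw [hφ _ _ hclock, hφ _ _ hclock, satW_withClock_countdown_iff hℓ.le]
  have hwithin := h.bisimW_withClock (stopsWithin_countdown (Fin.last ℓ).le_last)
  exact (K_iff 𝔐' h𝔐' w').2 (hK _ _ _ _ ((K_iff 𝔐 h𝔐 w).1 hw) (hC 𝔐' ℓ h𝔐') hwithin)

end Characterisation

theorem van_benthem_characterisation_general {P : Type} [Finite P]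
    (C : RelModel P → Prop)
    (hC : ∀ (𝔐 : RelModel P) (G : Type) [Finite G] [Nonempty G] (next : G → Option G),
      C 𝔐 → C (𝔐.withClock next))
    (K : (𝔐 : RelModel P) → 𝔐.W → Prop)
    (hK : ∀ (𝔐 : RelModel P) (w : 𝔐.W), K 𝔐 w → C 𝔐) :
    (∃ ψ : InqForm P, ∀ (𝔐 : RelModel P) (w : 𝔐.W), C 𝔐 →
        (K 𝔐 w ↔ truth 𝔐.toInq w ψ)) ↔
    (∃ φ : FO P 1 0,
        (∀ (𝔐 : RelModel P) (w : 𝔐.W), C 𝔐 → (K 𝔐 w ↔ satW 𝔐 φ w)) ∧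
        (∀ (𝔐 𝔐' : RelModel P) (w : 𝔐.W) (w' : 𝔐'.W),
          K 𝔐 w → C 𝔐' → BisimW 𝔐.toInq 𝔐'.toInq w w' → K 𝔐' w')) := by
  rw [exists_inqForm_iff_nBisimInvariant]
  constructor
  · rintro ⟨n, hn⟩
    obtain ⟨φ, hφ⟩ := hn.exists_fo
    exact ⟨φ, hφ, fun 𝔐 𝔐' w w' hw h𝔐' h => hn 𝔐 𝔐' w w' (hK 𝔐 w hw) h𝔐' (h.nBisimW n) hw⟩
  · rintro ⟨φ, hφ, hinv⟩
    exact ⟨_, nBisimInvariant_of_satW (fun 𝔐 ℓ => hC 𝔐 _ (countdown ℓ)) hφ hinv⟩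

/-- **Van Benthem–style characterisation of InqML**: over each of the four
classes (all / finite / locally full / finite locally full relational
inquisitive modal models), a class `K` of world-pointed models from `C` is
InqML-definable iff it is FO-definable and `~`-invariant over `C`. -/
theorem van_benthem_characterisation {P : Type} [Finite P]
    (C : RelModel P → Prop)
    (hC : C = (fun _ => True) ∨ C = (fun 𝔐 => Finite 𝔐.W) ∨
          C = (fun 𝔐 => LocallyFull 𝔐) ∨
          C = (fun 𝔐 => Finite 𝔐.W ∧ LocallyFull 𝔐))
    (K : (𝔐 : RelModel P) → 𝔐.W → Prop)
    (hK : ∀ (𝔐 : RelModel P) (w : 𝔐.W), K 𝔐 w → C 𝔐) :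
    (∃ ψ : InqForm P, ∀ (𝔐 : RelModel P) (w : 𝔐.W), C 𝔐 →
        (K 𝔐 w ↔ truth 𝔐.toInq w ψ)) ↔
    (∃ φ : FO P 1 0,
        (∀ (𝔐 : RelModel P) (w : 𝔐.W), C 𝔐 → (K 𝔐 w ↔ satW 𝔐 φ w)) ∧
        (∀ (𝔐 𝔐' : RelModel P) (w : 𝔐.W) (w' : 𝔐'.W),
          K 𝔐 w → C 𝔐' → BisimW 𝔐.toInq 𝔐'.toInq w w' → K 𝔐' w')) := by
  refine van_benthem_characterisation_general C (fun 𝔐 G _ _ next h𝔐 => ?_) K hK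
  obtain rfl | rfl | rfl | rfl := hC
  · trivial
  · have : Finite 𝔐.W := h𝔐
    exact finite_withClock 𝔐
  · exact locallyFull_withClock 𝔐
  · have : Finite 𝔐.W := h𝔐.1
    exact ⟨finite_withClock 𝔐, locallyFull_withClock 𝔐⟩
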